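/- arXiv:1912.01153 — 2 statements merged into one kernel-verified Lean document; each statement's English description precedes it below -/
import Mathlib

section
/- Let N ≥ 1 be odd and let k ≥ 2 be an even integer. Let a : ℕ → ℤ satisfy a(p^0) = 1 and a(p^(r+2)) = a(p)·a(p^(r+1)) − p^(k−1)·a(p^r) for every prime p not dividing N and every r ≥ 0. If a(2) ≠ 2^(k/2) and a(2) ≠ −2^(k/2), then either a(2) = 0 or a(2^r) ≠ 0 for all r ≥ 1. -/
/-! By the Hecke relations, `a (2 ^ r)` is the value at `a 2` of the Dickson polynomial of the
second kind with parameter `D = 2 ^ (k - 1)`. If the `r`-th polynomial with parameter `D` vanishes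
at an integer `x ≠ 0`, a rational-root argument shows that `x ^ 2 / D` is an integer, while a growth
argument gives `0 < x ^ 2 / D < 4`. Among the three remaining values of `x ^ 2`, for `D` a power of
two, `3 * D` is not a square, and `D` and `2 * D` lead to the excluded `x = ± 2 ^ (k / 2)`. -/

open Polynomial

section CommRing

variable {R : Type*} [CommRing R]

theorem eval_dickson_two_add_two (a x : R) (n : ℕ) :
    (dickson 2 a (n + 2)).eval x =
      x * (dickson 2 a (n + 1)).eval x - a * (dickson 2 a n).eval x := by
  simp [dickson_add_two]

theorem eval_dickson_two_zero (a x : R) : (dickson 2 a 0).eval x = 1 := by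
  rw [dickson_zero]
  norm_num

theorem eval_dickson_two_one (a x : R) : (dickson 2 a 1).eval x = x := by
  rw [dickson_one, eval_X]

theorem eq_eval_dickson_two {u : ℕ → R} {a x : R} (h0 : u 0 = 1) (h1 : u 1 = x)
    (hu : ∀ n, u (n + 2) = x * u (n + 1) - a * u n) (n : ℕ) :
    u n = (dickson 2 a n).eval x := by
  induction n using Nat.twoStepInduction with
  | zero => rw [h0, eval_dickson_two_zero]
  | one => rw [h1, eval_dickson_two_one]
  | more n ih ih' => rw [hu, ih, ih', eval_dickson_two_add_two]

theorem eval_mul_dickson_two_sq_mul (c a x : R) (n : ℕ) :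
    (dickson 2 (c ^ 2 * a) n).eval (c * x) = c ^ n * (dickson 2 a n).eval x := by
  refine (eq_eval_dickson_two (u := fun n ↦ c ^ n * (dickson 2 a n).eval x)
    ?_ ?_ (fun n ↦ ?_) n).symm
  · rw [pow_zero, one_mul, eval_dickson_two_zero]
  · rw [pow_one, eval_dickson_two_one]
  · rw [eval_dickson_two_add_two]
    ring

theorem dvd_eval_dickson_two_sub_pow (a x : R) (n : ℕ) :
    a ∣ (dickson 2 a n).eval x - x ^ n := by
  induction n using Nat.twoStepInduction with
  | zero => simp only [eval_dickson_two_zero, pow_zero, sub_self, dvd_zero]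
  | one => simp only [eval_dickson_two_one, pow_one, sub_self, dvd_zero]
  | more n _ ih =>
    have hsplit : (dickson 2 a (n + 2)).eval x - x ^ (n + 2) =
        x * ((dickson 2 a (n + 1)).eval x - x ^ (n + 1)) - a * (dickson 2 a n).eval x := by
      rw [eval_dickson_two_add_two]
      ring
    exact hsplit ▸ (ih.mul_left x).sub (dvd_mul_right a _)

/- After cancelling the common factor `g` of `x ^ 2 = g * q` and `a = g * s`, the root `x` becomes
the root `q` of the polynomial with parameter `q * s`, so `s ∣ q ^ n` with `s` and `q` coprime. -/
theorem dvd_sq_of_isRoot_dickson_two [GCDMonoid R] {a x : R} {n : ℕ}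
    (h : (dickson 2 a n).IsRoot x) : a ∣ x ^ 2 := by
  obtain ⟨q, s, hq, hs, hqs⟩ := extract_gcd (x ^ 2) a
  set g := gcd (x ^ 2) a
  rcases eq_or_ne g 0 with hg | hg
  · rw [hq, hg, zero_mul]
    exact dvd_zero a
  have hroot : (dickson 2 (q * s) n).eval q = 0 := by
    refine (mul_eq_zero.mp ?_).resolve_left (pow_ne_zero n hg)
    calc g ^ n * (dickson 2 (q * s) n).eval q
      _ = (dickson 2 (g ^ 2 * (q * s)) n).eval (g * q) :=
        (eval_mul_dickson_two_sq_mul g (q * s) q n).symm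
      _ = (dickson 2 (x ^ 2 * a) n).eval (x * x) := by
        rw [show g ^ 2 * (q * s) = g * q * (g * s) by ring, ← hq, ← hs, sq]
      _ = 0 := by rw [eval_mul_dickson_two_sq_mul, h.eq_zero, mul_zero]
  have hdvd : s ∣ q ^ n := by
    have hmod := dvd_eval_dickson_two_sub_pow (q * s) q n
    rw [hroot, zero_sub, dvd_neg] at hmod
    exact (dvd_mul_left s q).trans hmod
  have hcoprime : IsRelPrime (q ^ n) s := (gcd_isUnit_iff_isRelPrime.mp hqs).pow_left
  have hunit : IsUnit s := hcoprime hdvd dvd_rfl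
  rw [hq, hs]
  exact mul_dvd_mul_left g hunit.dvd

end CommRing

section LinearOrder

variable {R : Type*} [CommRing R] [LinearOrder R] [IsStrictOrderedRing R] {a x : R}

theorem eval_dickson_two_pos (hx : 0 < x) (h : 4 * a ≤ x ^ 2) (n : ℕ) :
    0 < (dickson 2 a n).eval x := by
  suffices hpos_growth : 0 < (dickson 2 a n).eval x ∧
      x * (dickson 2 a n).eval x ≤ 2 * (dickson 2 a (n + 1)).eval x from
    hpos_growth.1
  induction n with
  | zero =>
    rw [zero_add, eval_dickson_two_zero, eval_dickson_two_one]
    exact ⟨one_pos, by linarith⟩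
  | succ n ih =>
    obtain ⟨hpos, hgrowth⟩ := ih
    have hdisc : 4 * a * (dickson 2 a n).eval x ≤ x ^ 2 * (dickson 2 a n).eval x :=
      mul_le_mul_of_nonneg_right h hpos.le
    have hstep : x * (x * (dickson 2 a n).eval x) ≤ x * (2 * (dickson 2 a (n + 1)).eval x) :=
      mul_le_mul_of_nonneg_left hgrowth hx.le
    refine ⟨by linarith [mul_pos hx hpos], ?_⟩
    rw [eval_dickson_two_add_two]
    linarith

theorem not_isRoot_dickson_two_of_four_mul_le_sq (hx : x ≠ 0) (h : 4 * a ≤ x ^ 2) (n : ℕ) :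
    ¬ (dickson 2 a n).IsRoot x := by
  intro hroot
  rcases hx.lt_or_gt with hneg | hpos
  · have hroot_neg : (dickson 2 a n).eval (-x) = 0 := by
      simpa [hroot.eq_zero] using eval_mul_dickson_two_sq_mul (-1) a x n
    exact (eval_dickson_two_pos (neg_pos.mpr hneg) (by rwa [neg_sq]) n).ne' hroot_neg
  · exact (eval_dickson_two_pos hpos h n).ne' hroot

end LinearOrder

theorem sq_eq_of_isRoot_dickson_two {a x : ℤ} {n : ℕ} (hx : x ≠ 0)
    (h : (dickson 2 a n).IsRoot x) : x ^ 2 = a ∨ x ^ 2 = 2 * a ∨ x ^ 2 = 3 * a := by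
  obtain ⟨c, hc⟩ := dvd_sq_of_isRoot_dickson_two h
  have hlt : x ^ 2 < 4 * a :=
    not_le.mp fun hle ↦ not_isRoot_dickson_two_of_four_mul_le_sq hx hle n h
  have hsq : 0 < x ^ 2 := by positivity
  have ha : 0 < a := by linarith
  have hc0 : 0 < c := pos_of_mul_pos_right (hc ▸ hsq) ha.le
  have hc4 : c < 4 := lt_of_mul_lt_mul_left (by linarith) ha.le
  interval_cases c <;> lia

theorem sq_ne_prime_mul {M : Type*} [CommMonoidWithZero M] [IsCancelMulZero M] {q m : M}
    (hq : Prime q) (hm : ¬ q ∣ m) (x : M) : x ^ 2 ≠ q * m := by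
  intro h
  obtain ⟨y, rfl⟩ := hq.dvd_of_dvd_pow (Dvd.intro m h.symm)
  refine hm ⟨y ^ 2, mul_left_cancel₀ hq.ne_zero ?_⟩
  rw [← h, mul_pow, sq q, mul_assoc]

theorem exists_eq_or_eq_neg_pow_of_sq_eq_prime_pow {p m : ℕ} (hp : p.Prime) {x : ℤ}
    (h : x ^ 2 = (p : ℤ) ^ m) : ∃ j, m = 2 * j ∧ (x = (p : ℤ) ^ j ∨ x = -(p : ℤ) ^ j) := by
  have hnat : x.natAbs ^ 2 = p ^ m := by
    rw [← Int.natAbs_pow, h, Int.natAbs_pow, Int.natAbs_natCast]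
  obtain ⟨j, -, hj⟩ := (Nat.dvd_prime_pow hp).mp (hnat ▸ dvd_pow_self x.natAbs two_ne_zero)
  refine ⟨j, ?_, by simpa [hj] using Int.natAbs_eq x⟩
  rw [hj, ← pow_mul'] at hnat
  exact (Nat.pow_right_injective hp.two_le hnat).symm

/- For odd `k` the floor in `k / 2` is intended: then `x ^ 2 = 2 ^ (k - 1)` is the case that
survives, while for even `k` it is `x ^ 2 = 2 * 2 ^ (k - 1)`. -/
theorem eq_or_eq_neg_two_pow_half_of_isRoot_dickson_two {k n : ℕ} (hk : 1 ≤ k) {x : ℤ}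
    (hx : x ≠ 0) (h : (dickson 2 (2 ^ (k - 1)) n).IsRoot x) :
    x = 2 ^ (k / 2) ∨ x = -(2 ^ (k / 2)) := by
  rcases sq_eq_of_isRoot_dickson_two hx h with h1 | h2 | h3
  · obtain ⟨j, hj, hxj⟩ := exists_eq_or_eq_neg_pow_of_sq_eq_prime_pow Nat.prime_two h1
    rwa [show k / 2 = j by lia]
  · rw [mul_pow_sub_one (by lia)] at h2
    obtain ⟨j, hj, hxj⟩ := exists_eq_or_eq_neg_pow_of_sq_eq_prime_pow Nat.prime_two h2
    rwa [show k / 2 = j by lia]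
  · have hdvd : ¬ (3 : ℤ) ∣ 2 ^ (k - 1) := fun hdvd ↦
      absurd (Int.prime_three.dvd_of_dvd_pow hdvd) (by decide)
    exact absurd h3 (sq_ne_prime_mul Int.prime_three hdvd x)

theorem stmt_3_general {k : ℕ} (hk : 1 ≤ k) {a : ℕ → ℤ} (hone : a (2 ^ 0) = 1)
    (hrec : ∀ r, a (2 ^ (r + 2)) = a 2 * a (2 ^ (r + 1)) - 2 ^ (k - 1) * a (2 ^ r))
    (hpos : a 2 ≠ 2 ^ (k / 2)) (hneg : a 2 ≠ -(2 ^ (k / 2))) :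
    a 2 = 0 ∨ ∀ r, a (2 ^ r) ≠ 0 := by
  refine or_iff_not_imp_left.mpr fun h0 r hr ↦ ?_
  have hroot : (dickson 2 (2 ^ (k - 1)) r).IsRoot (a 2) :=
    (eq_eval_dickson_two (u := fun r ↦ a (2 ^ r)) hone (by simp) hrec r).symm.trans hr
  exact (eq_or_eq_neg_two_pow_half_of_isRoot_dickson_two hk h0 hroot).elim hpos hneg

/-- If `N` is odd (so `2 ∤ N`), `k ≥ 2` is even, `a : ℕ → ℤ` satisfies the Hecke
relations at primes not dividing `N`, and `a 2 ≠ ±2^(k/2)`, then either `a 2 = 0`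
or `a (2^r) ≠ 0` for all `r ≥ 1`. -/
theorem stmt_3 (N : ℕ) (hN : 1 ≤ N) (hNodd : Odd N) (k : ℕ) (hk : 2 ≤ k) (hke : Even k)
    (a : ℕ → ℤ)
    (hone : ∀ p : ℕ, p.Prime → ¬ p ∣ N → a (p ^ 0) = 1)
    (hrec : ∀ p : ℕ, p.Prime → ¬ p ∣ N → ∀ r : ℕ,
      a (p ^ (r + 2)) = a p * a (p ^ (r + 1)) - (p : ℤ) ^ (k - 1) * a (p ^ r))
    (h2 : a 2 ≠ 2 ^ (k / 2)) (h2' : a 2 ≠ -(2 ^ (k / 2))) :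
    a 2 = 0 ∨ ∀ r : ℕ, 1 ≤ r → a (2 ^ r) ≠ 0 := by
  have h2N : ¬ 2 ∣ N := hNodd.not_two_dvd_nat
  exact (stmt_3_general (one_le_two.trans hk) (hone 2 Nat.prime_two h2N)
    (hrec 2 Nat.prime_two h2N) h2 h2').imp_right fun h r _ ↦ h r
end

section
/- Let F be a number field which is Galois over ℚ of odd degree, with ring of integers O_F, let L ⊆ ℂ be a subfield finite-dimensional over ℚ, let k₀ ≥ 1 be an integer and let 𝔠 be a nonzero ideal of O_F. Let C be a ℂ-valued function on the nonzero ideals of O_F taking all its values in L, and suppose: for every nonzero prime ideal 𝔭 not dividing 𝔠 there is a root of unity χ(𝔭) ∈ L such that C(𝔭^(m+2)) = C(𝔭)·C(𝔭^(m+1)) − χ(𝔭)·N(𝔭)^(2k₀−1)·C(𝔭^m) for all m ≥ 0 with C(𝔭^0) = 1, where N(𝔭) is the absolute norm; and for every prime ideal 𝔭 dividing 𝔠, C(𝔭^(m+1)) = C(𝔭)·C(𝔭^m) for all m ≥ 0 with C(𝔭^0) = 1. Then there exists an integer M ≥ 1 divisible by N(𝔠) such that for every rational prime p not dividing M and every nonzero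 prime ideal 𝔭 of O_F lying above p, either C(𝔭) = 0 or C(𝔭^r) ≠ 0 for all r ≥ 1. -/
/-!
Suppose `𝔭 ∤ 𝔠` lies above `p`, has odd inertia degree, and `C 𝔭 ≠ 0 = C (𝔭 ^ r)`. With `α, β` such
that `α + β = C 𝔭` and `α β = χ(𝔭) N(𝔭) ^ (2k₀ - 1)`, the recurrence gives
`(α - β) C (𝔭 ^ r) = α ^ (r + 1) - β ^ (r + 1)`. The zero therefore forces `ζ = α / β` to be a root
of unity, and
`s = C(𝔭)² / N(𝔭) ^ (2k₀ - 1) = χ(𝔭) (ζ + 2 + ζ⁻¹)`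
is an algebraic integer of `L` all of whose conjugates have absolute value at most `4`; there are
only finitely many such `s`. Since `N(𝔭) ^ (2k₀ - 1)` is an odd power of `p`, the product `p s` is a
nonzero square in `L`. For fixed `s` this happens for finitely many `p` only, because the square
roots of `p s` for distinct `p` are orthogonal for the form `(x, y) ↦ Tr (x y / s)`, hence linearly
independent over `ℚ`.
-/

section LucasSequence

variable {R : Type*} [CommRing R]

/-- The Lucas sequence `Uₙ(a, b)` of the first kind, with characteristic polynomial `X² - a X + b`.
Hecke eigenvalues at the powers of a prime form such a sequence, shifted by one:
`C (𝔭 ^ m) = U_(m+1)`. -/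
def lucasU (a b : R) : ℕ → R
  | 0 => 0
  | 1 => 1
  | n + 2 => a * lucasU a b (n + 1) - b * lucasU a b n

theorem map_lucasU {S : Type*} [CommRing S] (φ : R →+* S) (a b : R) (n : ℕ) :
    φ (lucasU a b n) = lucasU (φ a) (φ b) n := by
  induction n using Nat.twoStepInduction with
  | zero => simp only [lucasU, map_zero]
  | one => simp only [lucasU, map_one]
  | more n ih ih' => simp only [lucasU, map_sub, map_mul, ih, ih']

theorem eq_lucasU_succ_of_recurrence {a b : R} {u : ℕ → R} (h0 : u 0 = 1) (h1 : u 1 = a)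
    (hu : ∀ m, u (m + 2) = a * u (m + 1) - b * u m) (m : ℕ) :
    u m = lucasU a b (m + 1) := by
  induction m using Nat.twoStepInduction with
  | zero => simp [lucasU, h0]
  | one => simp [lucasU, h1]
  | more m ih ih' => rw [hu, ih, ih']; rfl

theorem sub_mul_lucasU (α β : R) (n : ℕ) :
    (α - β) * lucasU (α + β) (α * β) n = α ^ n - β ^ n := by
  induction n using Nat.twoStepInduction with
  | zero => simp [lucasU]
  | one => simp [lucasU]
  | more n ih ih' =>
    rw [lucasU]
    linear_combination (α + β) * ih' - α * β * ih

theorem exists_add_eq_and_mul_eq {A : Type*} [Field A] [IsAlgClosed A] (a b : A) :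
    ∃ α β : A, α + β = a ∧ α * β = b := by
  open Polynomial in
  obtain ⟨α, hα⟩ := IsAlgClosed.exists_root (X ^ 2 - C a * X + C b : A[X]) <| by
    have hdeg : (X ^ 2 - C a * X + C b : A[X]).degree = 2 := by compute_degree!
    simp [hdeg]
  have hα : α ^ 2 - a * α + b = 0 := by simpa using hα
  exact ⟨α, a - α, by ring, by linear_combination -hα⟩

theorem exists_rootOfUnity_of_lucasU_eq_zero {A : Type*} [Field A] [IsAlgClosed A] {a b : A}
    (hb : b ≠ 0) {n : ℕ} (hn : lucasU a b n = 0) :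
    ∃ ζ : A, ζ ^ n = 1 ∧ a ^ 2 / b = ζ + 2 + ζ⁻¹ := by
  obtain ⟨α, β, rfl, rfl⟩ := exists_add_eq_and_mul_eq a b
  have hα : α ≠ 0 := left_ne_zero_of_mul hb
  have hβ : β ≠ 0 := right_ne_zero_of_mul hb
  have hpow : α ^ n = β ^ n := by
    rw [← sub_eq_zero, ← sub_mul_lucasU, hn, mul_zero]
  refine ⟨α / β, ?_, ?_⟩
  · rw [div_pow, hpow, div_self (pow_ne_zero n hβ)]
  · field_simp
    ring

theorem isIntegral_of_pow_eq_one {ζ : R} {n : ℕ} (hn : n ≠ 0) (hζ : ζ ^ n = 1) :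
    IsIntegral ℤ ζ :=
  .of_pow (Nat.pos_of_ne_zero hn) (hζ ▸ isIntegral_one)

theorem isIntegral_sq_div_of_lucasU_eq_zero {K : Type*} [Field K] {a b : K} (hb : b ≠ 0) {n : ℕ}
    (hn : n ≠ 0) (h : lucasU a b n = 0) : IsIntegral ℤ (a ^ 2 / b) := by
  let φ := algebraMap K (AlgebraicClosure K)
  obtain ⟨ζ, hζ, hab⟩ := exists_rootOfUnity_of_lucasU_eq_zero
    ((map_ne_zero φ).2 hb) (by rw [← map_lucasU, h, map_zero])
  have hζ' : ζ⁻¹ ^ n = 1 := by rw [inv_pow, hζ, inv_one]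
  have htwo : IsIntegral ℤ (2 : AlgebraicClosure K) := by
    simpa using isIntegral_algebraMap (R := ℤ) (A := AlgebraicClosure K) (x := 2)
  rw [← isIntegral_algebraMap_iff φ.injective, map_div₀, map_pow, hab]
  exact ((isIntegral_of_pow_eq_one hn hζ).add htwo).add (isIntegral_of_pow_eq_one hn hζ')

theorem norm_sq_div_le_four_of_lucasU_eq_zero {a b : ℂ} (hb : b ≠ 0) {n : ℕ} (hn : n ≠ 0)
    (h : lucasU a b n = 0) : ‖a ^ 2 / b‖ ≤ 4 := by
  obtain ⟨ζ, hζ, hab⟩ := exists_rootOfUnity_of_lucasU_eq_zero hb h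
  have hζ_norm : ‖ζ‖ = 1 := Complex.norm_eq_one_of_pow_eq_one hζ hn
  calc ‖a ^ 2 / b‖ = ‖ζ + 2 + ζ⁻¹‖ := by rw [hab]
    _ ≤ ‖ζ‖ + ‖(2 : ℂ)‖ + ‖ζ⁻¹‖ := norm_add₃_le
    _ = 4 := by rw [norm_inv, hζ_norm]; norm_num

theorem isIntegral_and_norm_le_four_of_lucasU_eq_zero {E : Type*} [Field E] {a χ q : E}
    (hχ : IsOfFinOrder χ) (hq : q ≠ 0) {n : ℕ} (hn : n ≠ 0) (h : lucasU a (χ * q) n = 0) :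
    IsIntegral ℤ (a ^ 2 / q) ∧ ∀ φ : E →+* ℂ, ‖φ (a ^ 2 / q)‖ ≤ 4 := by
  have hχ0 : χ ≠ 0 := hχ.isUnit.ne_zero
  have hb : χ * q ≠ 0 := mul_ne_zero hχ0 hq
  have hsplit : a ^ 2 / q = χ * (a ^ 2 / (χ * q)) := by field_simp
  rw [hsplit]
  refine ⟨?_, fun φ => ?_⟩
  · exact (isIntegral_of_pow_eq_one hχ.orderOf_pos.ne' (pow_orderOf_eq_one χ)).mul
      (isIntegral_sq_div_of_lucasU_eq_zero hb hn h)
  · have hφχ : ‖φ χ‖ = 1 := (φ.toMonoidHom.isOfFinOrder hχ).norm_eq_one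
    rw [map_mul, norm_mul, hφχ, one_mul, map_div₀, map_pow]
    exact norm_sq_div_le_four_of_lucasU_eq_zero ((map_ne_zero φ).2 hb) hn
      (by rw [← map_lucasU, h, map_zero])

end LucasSequence

section SquareClasses

theorem trace_eq_zero_of_sq_eq_algebraMap {K E : Type*} [Field K] [Field E] [Algebra K E]
    [FiniteDimensional K E] {r : K} (hr : ¬ IsSquare r) {z : E} (hz : z ^ 2 = algebraMap K E r) :
    Algebra.trace K E z = 0 := by
  open Polynomial in
  have hmin : minpoly K z = X ^ 2 - C r := by
    refine (minpoly.eq_of_irreducible_of_monic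
      (X_pow_sub_C_irreducible_of_prime Nat.prime_two fun t ht => hr ⟨t, by rw [← ht, sq]⟩)
      ?_ (monic_X_pow_sub_C r two_ne_zero)).symm
    simp [hz]
  rw [trace_eq_finrank_mul_minpoly_nextCoeff, hmin,
    Polynomial.nextCoeff_of_natDegree_pos (by simp)]
  simp

theorem linearIndependent_of_sq_eq_algebraMap_mul {K E ι : Type*} [Field K] [CharZero K] [Field E]
    [Algebra K E] [FiniteDimensional K E] {d : ι → K} (hd : ∀ i, d i ≠ 0)
    (hdd : Pairwise fun i j => ¬ IsSquare (d i * d j)) {s : E} (hs : s ≠ 0) {y : ι → E}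
    (hy : ∀ i, y i ^ 2 = algebraMap K E (d i) * s) : LinearIndependent K y := by
  let B : LinearMap.BilinForm K E := (Algebra.traceForm K E).compLeft (LinearMap.mulLeft K s⁻¹)
  have hB (u v : E) : B u v = Algebra.trace K E (s⁻¹ * u * v) := rfl
  refine LinearMap.BilinForm.linearIndependent_of_iIsOrtho (B := B) (fun i j hij => ?_) fun i => ?_
  · refine trace_eq_zero_of_sq_eq_algebraMap (hdd hij) ?_
    calc (s⁻¹ * y i * y j) ^ 2 = s⁻¹ ^ 2 * y i ^ 2 * y j ^ 2 := by ring
      _ = algebraMap K E (d i * d j) := by rw [hy, hy, map_mul]; field_simp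
  · have hyi : s⁻¹ * y i * y i = algebraMap K E (d i) := by
      rw [mul_assoc, ← sq, hy]
      field_simp
    rw [hB, hyi, Algebra.trace_algebraMap, smul_ne_zero_iff]
    exact ⟨Module.finrank_pos.ne', hd i⟩

theorem not_isSquare_mul_of_prime {p q : ℕ} (hp : p.Prime) (hq : q.Prime) (hpq : p ≠ q) :
    ¬ IsSquare (p * q) := by
  rintro ⟨n, hn⟩
  obtain ⟨m, rfl⟩ : p ∣ n := or_self_iff.1 (hp.dvd_mul.1 ⟨q, hn.symm⟩)
  have hqm : q = p * (m * m) := Nat.eq_of_mul_eq_mul_left hp.pos (by rw [hn]; ring)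
  exact hpq ((Nat.prime_dvd_prime_iff_eq hp hq).1 ⟨_, hqm⟩)

theorem finite_setOf_prime_isSquare_mul {E : Type*} [Field E] [NumberField E] {s : E}
    (hs : s ≠ 0) : {p : ℕ | p.Prime ∧ IsSquare (p * s)}.Finite := by
  choose y hy using fun p : {p : ℕ | p.Prime ∧ IsSquare (p * s)} => p.2.2
  have hli : LinearIndependent ℚ y := by
    refine linearIndependent_of_sq_eq_algebraMap_mul (d := fun p => (p.1 : ℚ))
      (fun p => Nat.cast_ne_zero.2 p.2.1.ne_zero) (fun p q hpq => ?_) hs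
      fun p => by rw [map_natCast, hy, sq]
    simp only [← Nat.cast_mul, Rat.isSquare_natCast_iff]
    exact not_isSquare_mul_of_prime p.2.1 q.2.1 (Subtype.coe_ne_coe.2 hpq)
  exact @Set.toFinite _ _ hli.finite

theorem isSquare_mul_sq_div_pow_of_odd {E : Type*} [Field E] (a : E) {x : E} (hx : x ≠ 0) {e : ℕ}
    (he : Odd e) : IsSquare (x * (a ^ 2 / x ^ e)) := by
  obtain ⟨j, rfl⟩ := he
  refine ⟨a / x ^ j, ?_⟩
  field_simp
  ring

end SquareClasses

theorem finite_setOf_prime_lucasU_eq_zero (E : Type*) [Field E] [NumberField E] :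
    {p : ℕ | p.Prime ∧ ∃ (a χ : E) (e n : ℕ), a ≠ 0 ∧ IsOfFinOrder χ ∧ Odd e ∧ n ≠ 0 ∧
      lucasU a (χ * p ^ e) n = 0}.Finite := by
  let S : Set E := {s | IsIntegral ℤ s ∧ ∀ φ : E →+* ℂ, ‖φ s‖ ≤ 4}
  have hS : S.Finite := NumberField.Embeddings.finite_of_norm_le E ℂ 4
  refine ((hS.sdiff (t := {0})).biUnion fun s hs => finite_setOf_prime_isSquare_mul hs.2).subset ?_
  rintro p ⟨hp, a, χ, e, n, ha, hχ, he, hn, h⟩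
  have hpE : (p : E) ≠ 0 := Nat.cast_ne_zero.2 hp.ne_zero
  have hpe : (p : E) ^ e ≠ 0 := pow_ne_zero e hpE
  exact Set.mem_biUnion ⟨isIntegral_and_norm_le_four_of_lucasU_eq_zero hχ hpe hn h,
    div_ne_zero (pow_ne_zero 2 ha) hpe⟩ ⟨hp, isSquare_mul_sq_div_pow_of_odd a hpE he⟩

section PrimeIdeals

open NumberField

theorem inertiaDeg_dvd_card_of_isGaloisGroup {A B : Type*} [CommRing A] [IsDomain A] [CommRing B]
    [IsDomain B] [Algebra A B] [Module.Finite A B] [Module.Flat A B] (G : Type*) [Group G]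
    [Finite G] [MulSemiringAction G B] [IsGaloisGroup G A B] (P : Ideal B) [P.IsPrime] :
    P.inertiaDeg A ∣ Nat.card G := by
  rw [← Ideal.inertiaDegIn_eq_inertiaDeg (P.under A) P G,
    ← Ideal.ncard_primesOver_mul_ramificationIdxIn_mul_inertiaDegIn (P.under A) B G]
  exact (dvd_mul_left _ _).mul_left _

theorem inertiaDeg_dvd_finrank {F : Type*} [Field F] [NumberField F] [IsGalois ℚ F]
    (𝔭 : Ideal (𝓞 F)) [𝔭.IsPrime] : 𝔭.inertiaDeg ℤ ∣ Module.finrank ℚ F := by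
  rw [← IsGaloisGroup.card_eq_finrank Gal(F/ℚ) ℚ F]
  exact inertiaDeg_dvd_card_of_isGaloisGroup Gal(F/ℚ) 𝔭

theorem absNorm_eq_pow_inertiaDeg_of_natCast_mem {R : Type*} [CommRing R] [IsDedekindDomain R]
    [Module.Free ℤ R] [Module.Finite ℤ R] {p : ℕ} (hp : p.Prime) (P : Ideal R) [hP : P.IsPrime]
    (hpP : (p : R) ∈ P) : Ideal.absNorm P = p ^ P.inertiaDeg ℤ := by
  have : P.LiesOver (Ideal.span {(p : ℤ)}) :=
    (Ideal.liesOver_span_iff hP.ne_top (Nat.prime_iff_prime_int.1 hp)).2 (by simpa using hpP)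
  exact (Ideal.pow_inertiaDeg p P).symm

end PrimeIdeals

open NumberField in
theorem stmt_19_general {F K : Type*} [Field F] [NumberField F] [Field K] [CharZero K]
    (L : IntermediateField ℚ K) [FiniteDimensional ℚ L] {w : ℕ} (hw : Odd w)
    {𝔠 : Ideal (𝓞 F)} (h𝔠 : 𝔠 ≠ ⊥) {C : Ideal (𝓞 F) → K}
    (hCL : ∀ 𝔭 : Ideal (𝓞 F), 𝔭.IsPrime → 𝔭 ≠ ⊥ → ¬ 𝔭 ∣ 𝔠 → C 𝔭 ∈ L)
    (hrec : ∀ 𝔭 : Ideal (𝓞 F), 𝔭.IsPrime → 𝔭 ≠ ⊥ → ¬ 𝔭 ∣ 𝔠 →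
      ∃ χ : K, χ ∈ L ∧ (∃ n : ℕ, 0 < n ∧ χ ^ n = 1) ∧ C (𝔭 ^ 0) = 1 ∧
        ∀ m : ℕ, C (𝔭 ^ (m + 2)) =
          C 𝔭 * C (𝔭 ^ (m + 1)) - χ * (Ideal.absNorm 𝔭 : K) ^ w * C (𝔭 ^ m)) :
    ∃ M : ℕ, 1 ≤ M ∧ Ideal.absNorm 𝔠 ∣ M ∧
      ∀ p : ℕ, p.Prime → ¬ p ∣ M →
        ∀ 𝔭 : Ideal (𝓞 F), 𝔭.IsPrime → 𝔭 ≠ ⊥ → (p : 𝓞 F) ∈ 𝔭 → Odd (𝔭.inertiaDeg ℤ) →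
          C 𝔭 = 0 ∨ ∀ r : ℕ, C (𝔭 ^ r) ≠ 0 := by
  have : NumberField L := { to_charZero := inferInstance, to_finiteDimensional := inferInstance }
  obtain ⟨B, hB⟩ := (finite_setOf_prime_lucasU_eq_zero L).bddAbove
  refine ⟨Ideal.absNorm 𝔠 * B.factorial, Nat.one_le_iff_ne_zero.2 <|
    mul_ne_zero (Ideal.absNorm_eq_zero_iff.not.2 h𝔠) B.factorial_ne_zero, dvd_mul_right _ _, ?_⟩
  intro p hp hpM 𝔭 h𝔭 h𝔭0 hp𝔭 hodd
  have hN := absNorm_eq_pow_inertiaDeg_of_natCast_mem hp 𝔭 hp𝔭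
  have h𝔭𝔠 : ¬ 𝔭 ∣ 𝔠 := fun h => hpM <| Dvd.dvd.mul_right
    (((dvd_pow_self p hodd.pos.ne').trans hN.symm.dvd).trans (map_dvd Ideal.absNorm h)) _
  obtain ⟨χ, hχL, hχ, h0, hu⟩ := hrec 𝔭 h𝔭 h𝔭0 h𝔭𝔠
  by_contra! ⟨ha, r, hr⟩
  have hlucas : lucasU (⟨C 𝔭, hCL 𝔭 h𝔭 h𝔭0 h𝔭𝔠⟩ : L)
      (⟨χ, hχL⟩ * p ^ (𝔭.inertiaDeg ℤ * w)) (r + 1) = 0 := by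
    refine (algebraMap L K).injective ?_
    rw [map_lucasU, map_zero, ← hr]
    refine (eq_lucasU_succ_of_recurrence (u := fun m => C (𝔭 ^ m)) h0 (by simp) ?_ r).symm
    simp [hu, hN, pow_mul]
  have hpB : p ≤ B := hB ⟨hp, _, _, _, _, Subtype.coe_ne_coe.1 ha,
    isOfFinOrder_iff_pow_eq_one.2 (hχ.imp fun n hn => ⟨hn.1, Subtype.ext hn.2⟩), hodd.mul hw,
    r.succ_ne_zero, hlucas⟩
  exact hpM (Dvd.dvd.mul_left (Nat.dvd_factorial hp.pos hpB) _)

open NumberField in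
/-- Coefficient-level non-vanishing result for primitive Hilbert modular forms over a
field `F` Galois over `ℚ` of odd degree: there is `M ≥ 1` with `N(𝔠) ∣ M` such that
for every rational prime `p ∤ M` and every nonzero prime ideal `𝔭` of `O_F` above `p`,
either `C 𝔭 = 0` or `C (𝔭^r) ≠ 0` for all `r ≥ 1`. -/
theorem stmt_19 (F : Type*) [Field F] [NumberField F] [IsGalois ℚ F]
    (hodd : Odd (Module.finrank ℚ F))
    (L : IntermediateField ℚ ℂ) [FiniteDimensional ℚ L]
    (k₀ : ℕ) (hk₀ : 1 ≤ k₀)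
    (𝔠 : Ideal (𝓞 F)) (h𝔠 : 𝔠 ≠ ⊥)
    (C : Ideal (𝓞 F) → ℂ)
    (hCL : ∀ I : Ideal (𝓞 F), I ≠ ⊥ → C I ∈ L)
    (hrec : ∀ 𝔭 : Ideal (𝓞 F), 𝔭.IsPrime → 𝔭 ≠ ⊥ → ¬ 𝔭 ∣ 𝔠 →
      ∃ χ : ℂ, χ ∈ L ∧ (∃ n : ℕ, 0 < n ∧ χ ^ n = 1) ∧ C (𝔭 ^ 0) = 1 ∧
        ∀ m : ℕ, C (𝔭 ^ (m + 2)) =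
          C 𝔭 * C (𝔭 ^ (m + 1)) - χ * (Ideal.absNorm 𝔭 : ℂ) ^ (2 * k₀ - 1) * C (𝔭 ^ m))
    (hdvd : ∀ 𝔭 : Ideal (𝓞 F), 𝔭.IsPrime → 𝔭 ≠ ⊥ → 𝔭 ∣ 𝔠 →
      C (𝔭 ^ 0) = 1 ∧ ∀ m : ℕ, C (𝔭 ^ (m + 1)) = C 𝔭 * C (𝔭 ^ m)) :
    ∃ M : ℕ, 1 ≤ M ∧ Ideal.absNorm 𝔠 ∣ M ∧
      ∀ p : ℕ, p.Prime → ¬ p ∣ M →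
        ∀ 𝔭 : Ideal (𝓞 F), 𝔭.IsPrime → 𝔭 ≠ ⊥ → (p : 𝓞 F) ∈ 𝔭 →
          C 𝔭 = 0 ∨ ∀ r : ℕ, 1 ≤ r → C (𝔭 ^ r) ≠ 0 := by
  obtain ⟨M, hM, h𝔠M, h⟩ := stmt_19_general L (w := 2 * k₀ - 1) ⟨k₀ - 1, by omega⟩ h𝔠
    (fun 𝔭 _ h𝔭0 _ => hCL 𝔭 h𝔭0) hrec
  exact ⟨M, hM, h𝔠M, fun p hp hpM 𝔭 h𝔭 h𝔭0 hp𝔭 =>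
    (h p hp hpM 𝔭 h𝔭 h𝔭0 hp𝔭 (hodd.of_dvd_nat (inertiaDeg_dvd_finrank 𝔭))).imp_right
      fun hne r _ => hne r⟩
end
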